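/- arXiv:2309.05168 — 2 statements merged into one kernel-verified Lean document; each statement's English description precedes it below -/
import Mathlib

section
/- Assume (A)–(D). Then for every (u₁,…,u_N) ∈ 𝒩_k⁺ and every b ∈ {1,…,B}, the equalities u_{pb−p+1} = u_{pb−p+2} = ⋯ = u_{pb} cannot all hold. Consequently σU ≠ U for every U ∈ 𝒩_k⁺, and no component of an element of 𝒩_k⁺ is 𝓡_{2π/(pk)}-invariant. -/
noncomputable section

open Real MeasureTheory Finset

abbrev Euc (n : ℕ) := EuclideanSpace ℝ (Fin n)

/-- The rotation `R_θ` by angle `θ` in the `(x₁,x₂)`-plane (fixing remaining coordinates). -/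
def rotPt {n : ℕ} (θ : ℝ) (x : Euc n) : Euc n :=
  WithLp.toLp 2 fun i => if (i : ℕ) = 0 then Real.cos θ * x i - Real.sin θ * x ⟨1 % n, Nat.mod_lt 1 i.pos⟩
    else if (i : ℕ) = 1 then Real.sin θ * x ⟨0, i.pos⟩ + Real.cos θ * x i
    else x i

/-- `u` is `𝓡_θ`-invariant on `Ω`, i.e. `u (R_{-θ} x) = u x` on `Ω`. -/
def RotInv {n : ℕ} (θ : ℝ) (Ω : Set (Euc n)) (u : Euc n → ℝ) : Prop :=
  ∀ x ∈ Ω, u (rotPt (-θ) x) = u x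

def IsRadialFn {n : ℕ} (Ω : Set (Euc n)) (u : Euc n → ℝ) : Prop :=
  ∀ x ∈ Ω, ∀ y ∈ Ω, ‖x‖ = ‖y‖ → u x = u y

/-- `Ω` is an open ball or an open annulus centered at the origin. -/
def RadialDomain {n : ℕ} (Ω : Set (Euc n)) : Prop :=
  (∃ R : ℝ, 0 < R ∧ Ω = Metric.ball (0 : Euc n) R) ∨
  (∃ r R : ℝ, 0 < r ∧ r < R ∧ Ω = {x : Euc n | r < ‖x‖ ∧ ‖x‖ < R})

/-- The Laplacian of `u`. -/
def lap {n : ℕ} (u : Euc n → ℝ) (x : Euc n) : ℝ :=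
  ∑ i : Fin n, fderiv ℝ (fun y => fderiv ℝ u y (EuclideanSpace.single i 1)) x
    (EuclideanSpace.single i 1)

/-- The squared `H¹` norm. -/
def H1norm2 {n : ℕ} (Ω : Set (Euc n)) (u : Euc n → ℝ) : ℝ :=
  ∫ x in Ω, (‖fderiv ℝ u x‖ ^ 2 + (u x) ^ 2)

/-- 1-based block cyclic shift `π`. -/
def blockCycle (p : ℕ) (j : ℕ) : ℕ := if j % p = 0 then j + 1 - p else j + 1

/-- Assumptions (A)-(D). -/
def SysAssump (N p B : ℕ) (lam mu : ℕ → ℝ) (beta : ℕ → ℕ → ℝ) : Prop :=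
  p.Prime ∧ N = p * B ∧ 0 < B ∧
  -- (A)
  (∀ b ∈ Finset.Icc 1 B, ∀ i ∈ Finset.Icc (p * b - p + 1) (p * b),
    lam i = lam (p * b) ∧ 0 < lam i) ∧
  -- (B)
  (∀ i ∈ Finset.Icc 1 N, ∀ j ∈ Finset.Icc 1 N, i ≠ j → beta i j = beta j i ∧ beta i j ≤ 0) ∧
  (∀ j ∈ Finset.Icc 1 N, 0 < mu j) ∧
  -- (C)
  (∀ i ∈ Finset.Icc 1 N, ∀ j ∈ Finset.Icc 1 N, i ≠ j →
    beta (blockCycle p i) (blockCycle p j) = beta i j) ∧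
  -- (D)
  (∀ b ∈ Finset.Icc 1 B, ∀ j ∈ Finset.Icc (p * b - p + 1) (p * b),
    mu j + ∑ i ∈ (Finset.Icc (p * b - p + 1) (p * b)).erase j, beta i j ≤ 0)

/-- Classical solution of the system (S). -/
def IsClassicalSolution {n : ℕ} (Ω : Set (Euc n)) (N : ℕ) (lam mu : ℕ → ℝ)
    (beta : ℕ → ℕ → ℝ) (u : ℕ → Euc n → ℝ) : Prop :=
  ∀ j ∈ Finset.Icc 1 N,
    ContDiffOn ℝ 2 (u j) Ω ∧ ContinuousOn (u j) (closure Ω) ∧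
    (∀ x ∈ frontier Ω, u j x = 0) ∧
    (∀ x ∈ Ω, -(lap (u j) x) + lam j * u j x =
      mu j * (u j x) ^ 3 + ∑ m ∈ (Finset.Icc 1 N).erase j, beta j m * u j x * (u m x) ^ 2)


/-- Membership in the Nehari-type set `𝒩ₖ⁺` (1-based indices `1,…,N`). -/
def InNehariPos {n : ℕ} (Ω : Set (Euc n)) (N p k : ℕ) (lam mu : ℕ → ℝ)
    (beta : ℕ → ℕ → ℝ) (u : ℕ → Euc n → ℝ) : Prop :=
  (∀ j ∈ Finset.Icc 1 N,
    ContDiffOn ℝ 1 (u j) (closure Ω) ∧ (∀ x ∈ frontier Ω, u j x = 0) ∧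
    (∃ x ∈ Ω, u j x ≠ 0) ∧
    RotInv (2 * π / k) Ω (u j) ∧
    (∫ x in Ω, (‖fderiv ℝ (u j) x‖ ^ 2 + lam j * (u j x) ^ 2)) =
      mu j * (∫ x in Ω, (max (u j x) 0) ^ 4) +
        ∑ m ∈ (Finset.Icc 1 N).erase j, beta j m * ∫ x in Ω, (u j x) ^ 2 * (u m x) ^ 2) ∧
  (∀ j, 1 ≤ j → j < N → ¬ (p ∣ j) →
    ∀ x ∈ Ω, u (j + 1) x = u j (rotPt (-(2 * π / ((p : ℝ) * k))) x))

/-!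
Suppose that all components of a block equal `v = u_j`. The coupling terms with the other blocks in
the `j`-th Nehari identity are nonpositive, and within the block `∫ v² u_m² = ∫ v⁴`, so by `v⁺ ≤ |v|`
and (D) the right-hand side is at most `(μ_j + ∑_m β_{jm}) ∫ v⁴ ≤ 0`. The left-hand side is positive,
a contradiction. A fixed point of `σ` has constant blocks. So does an element of `𝒩ₖ⁺` with an
`𝓡_{2π/(pk)}`-invariant component: neighbouring components of a block differ by that rotation, so
the invariance spreads through the whole block and makes the neighbours equal.
-/

section DerivativeUpToBoundary

open Filter Topology

variable {𝕜 E F : Type*} [NontriviallyNormedField 𝕜] [NormedAddCommGroup E] [NormedSpace 𝕜 E]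
  [NormedAddCommGroup F] [NormedSpace 𝕜 F] {s : Set E} {f : E → F}

theorem exists_tendsto_fderiv_nhdsWithin {x : E} (hs : IsOpen s)
    (hf : ContDiffWithinAt 𝕜 1 f s x) :
    ∃ f' : E →L[𝕜] F, Tendsto (fderiv 𝕜 f) (𝓝[s] x) (𝓝 f') := by
  obtain ⟨w, hw, -, -, f', hf', hf'_cont⟩ :=
    (contDiffWithinAt_succ_iff_hasFDerivWithinAt' (n := 0) (by simp)).1 (by simpa using hf)
  have hws : w ∈ 𝓝[s] x := nhdsWithin_mono x (Set.subset_insert x s) hw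
  refine ⟨f' x, hf'_cont.continuousWithinAt.tendsto.congr' ?_⟩
  filter_upwards [hws, self_mem_nhdsWithin] with y hyw hys
  exact ((hf' y hyw).hasFDerivAt (hs.mem_nhds hys)).fderiv.symm

theorem exists_continuousOn_closure_eqOn_fderiv (hs : IsOpen s)
    (hf : ContDiffOn 𝕜 1 f (closure s)) :
    ∃ f' : E → E →L[𝕜] F, ContinuousOn f' (closure s) ∧ Set.EqOn f' (fderiv 𝕜 f) s :=
  ⟨extendFrom s (fderiv 𝕜 f),
    continuousOn_extendFrom subset_rfl fun x hx =>
      exists_tendsto_fderiv_nhdsWithin hs ((hf x hx).mono subset_closure),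
    extendFrom_extends ((hf.mono subset_closure).continuousOn_fderiv_of_isOpen hs le_rfl)⟩

end DerivativeUpToBoundary

section Energy

theorem integrableOn_of_continuousOn_closure {X F : Type*} [TopologicalSpace X]
    [MeasurableSpace X] [OpensMeasurableSpace X] [NormedAddCommGroup F] {ν : Measure X}
    [IsFiniteMeasureOnCompacts ν] {s : Set X} {f : X → F}
    (hs : IsCompact (closure s)) (hf : ContinuousOn f (closure s)) : IntegrableOn f s ν :=
  (hf.integrableOn_compact' hs isClosed_closure.measurableSet).mono_set subset_closure

variable {E : Type*} [NormedAddCommGroup E] [NormedSpace ℝ E] [MeasurableSpace E]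
  [OpensMeasurableSpace E] {ν : Measure E} [IsFiniteMeasureOnCompacts ν] {s : Set E}

theorem integrableOn_norm_fderiv_sq {F : Type*} [NormedAddCommGroup F] [NormedSpace ℝ F]
    {f : E → F} (hso : IsOpen s) (hs : IsCompact (closure s))
    (hf : ContDiffOn ℝ 1 f (closure s)) :
    IntegrableOn (fun x => ‖fderiv ℝ f x‖ ^ 2) s ν := by
  obtain ⟨f', hf'_cont, hf'⟩ := exists_continuousOn_closure_eqOn_fderiv hso hf
  refine (integrableOn_of_continuousOn_closure hs (hf'_cont.norm.pow 2)).congr_fun ?_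
    hso.measurableSet
  exact fun x hx => congrArg (‖·‖ ^ 2) (hf' hx)

theorem setIntegral_norm_fderiv_sq_add_mul_sq_pos [ν.IsOpenPosMeasure] {v : E → ℝ} {l : ℝ}
    (hso : IsOpen s) (hs : IsCompact (closure s)) (hv : ContDiffOn ℝ 1 v (closure s))
    (hne : ∃ x ∈ s, v x ≠ 0) (hl : 0 < l) :
    0 < ∫ x in s, (‖fderiv ℝ v x‖ ^ 2 + l * v x ^ 2) ∂ν := by
  have hint : IntegrableOn (fun x => ‖fderiv ℝ v x‖ ^ 2 + l * v x ^ 2) s ν :=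
    (integrableOn_norm_fderiv_sq hso hs hv).add
      (integrableOn_of_continuousOn_closure hs (continuousOn_const.mul (hv.continuousOn.pow 2)))
  rw [setIntegral_pos_iff_support_of_nonneg_ae (.of_forall fun x => by positivity) hint]
  have hopen : IsOpen (s ∩ v ⁻¹' {0}ᶜ) :=
    (hv.continuousOn.mono subset_closure).isOpen_inter_preimage hso isOpen_compl_singleton
  refine (hopen.measure_pos ν hne).trans_le (measure_mono ?_)
  rintro x ⟨hx, hvx : v x ≠ 0⟩
  exact ⟨ne_of_gt (show 0 < ‖fderiv ℝ v x‖ ^ 2 + l * v x ^ 2 by positivity), hx⟩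

end Energy

section NehariIdentity

theorem max_zero_pow_le_pow {a : ℝ} {m : ℕ} (hm : Even m) : max a 0 ^ m ≤ a ^ m := by
  rw [← hm.pow_abs a]
  gcongr
  exact max_le (le_abs_self a) (abs_nonneg a)

variable {ι : Type*} [DecidableEq ι] {s t : Finset ι} {j : ι}

theorem mul_integral_posPart_pow_four_add_sum_nonpos {X : Type*} [MeasurableSpace X]
    {ν : Measure X} {v : ι → X → ℝ} {m : ℝ} {c : ι → ℝ} (hst : s ⊆ t) (hm : 0 ≤ m)
    (hc : ∀ i ∈ t.erase j, c i ≤ 0) (hmc : m + ∑ i ∈ s.erase j, c i ≤ 0)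
    (hint : Integrable (fun x => v j x ^ 4) ν) (heq : ∀ i ∈ s, v i =ᵐ[ν] v j) :
    m * ∫ x, max (v j x) 0 ^ 4 ∂ν + ∑ i ∈ t.erase j, c i * ∫ x, v j x ^ 2 * v i x ^ 2 ∂ν ≤ 0 := by
  have hpos : ∫ x, max (v j x) 0 ^ 4 ∂ν ≤ ∫ x, v j x ^ 4 ∂ν :=
    integral_mono_of_nonneg (.of_forall fun x => by positivity) hint
      (.of_forall fun x => max_zero_pow_le_pow (by decide))
  have houtside (i : ι) (hi : i ∈ t.erase j) : c i * ∫ x, v j x ^ 2 * v i x ^ 2 ∂ν ≤ 0 :=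
    mul_nonpos_of_nonpos_of_nonneg (hc i hi) (integral_nonneg fun x => by positivity)
  have hinside (i : ι) (hi : i ∈ s) : ∫ x, v j x ^ 2 * v i x ^ 2 ∂ν = ∫ x, v j x ^ 4 ∂ν := by
    refine integral_congr_ae ((heq i hi).mono fun x hx => ?_)
    simp only [hx]
    ring
  calc
    m * ∫ x, max (v j x) 0 ^ 4 ∂ν + ∑ i ∈ t.erase j, c i * ∫ x, v j x ^ 2 * v i x ^ 2 ∂ν
      ≤ m * ∫ x, v j x ^ 4 ∂ν + ∑ i ∈ s.erase j, c i * ∫ x, v j x ^ 2 * v i x ^ 2 ∂ν := by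
        gcongr ?_ * ?_ + ?_
        exact Finset.sum_le_sum_of_subset_of_nonpos' (Finset.erase_subset_erase j hst)
          fun i hi _ => houtside i hi
    _ = (m + ∑ i ∈ s.erase j, c i) * ∫ x, v j x ^ 4 ∂ν := by
        rw [add_mul, Finset.sum_mul]
        congr 1
        exact Finset.sum_congr rfl fun i hi => by rw [hinside i (Finset.mem_of_mem_erase hi)]
    _ ≤ 0 := mul_nonpos_of_nonpos_of_nonneg hmc (integral_nonneg fun x => by positivity)

/-- The `j`-th component of the tuple `u`, indexed by `t`, is nontrivial, of class `C¹` up to the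
boundary of `Ω`, and satisfies its Nehari identity with respect to the measure `ν`. Unlike in
`InNehariPos`, neither the boundary values nor a symmetry are prescribed. -/
structure IsNehariComponent {E : Type*} [NormedAddCommGroup E] [NormedSpace ℝ E]
    [MeasurableSpace E] (Ω : Set E) (ν : Measure E) (t : Finset ι) (lam mu : ι → ℝ)
    (beta : ι → ι → ℝ) (u : ι → E → ℝ) (j : ι) : Prop where
  contDiffOn : ContDiffOn ℝ 1 (u j) (closure Ω)
  exists_ne_zero : ∃ x ∈ Ω, u j x ≠ 0
  energy_eq : ∫ x in Ω, (‖fderiv ℝ (u j) x‖ ^ 2 + lam j * u j x ^ 2) ∂ν =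
    mu j * ∫ x in Ω, max (u j x) 0 ^ 4 ∂ν +
      ∑ m ∈ t.erase j, beta j m * ∫ x in Ω, u j x ^ 2 * u m x ^ 2 ∂ν

theorem IsNehariComponent.not_forall_eqOn {E : Type*} [NormedAddCommGroup E] [NormedSpace ℝ E]
    [MeasurableSpace E] [OpensMeasurableSpace E] {ν : Measure E} [IsFiniteMeasureOnCompacts ν]
    [ν.IsOpenPosMeasure] {Ω : Set E} {lam mu : ι → ℝ} {beta : ι → ι → ℝ} {u : ι → E → ℝ}
    (hu : IsNehariComponent Ω ν t lam mu beta u j) (hΩ : IsOpen Ω) (hΩc : IsCompact (closure Ω))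
    (hst : s ⊆ t) (hlam : 0 < lam j) (hmu : 0 ≤ mu j) (hbeta : ∀ i ∈ t.erase j, beta j i ≤ 0)
    (hrow : mu j + ∑ i ∈ s.erase j, beta j i ≤ 0) :
    ¬ ∀ i ∈ s, Set.EqOn (u i) (u j) Ω := by
  intro heq
  have henergy := setIntegral_norm_fderiv_sq_add_mul_sq_pos (ν := ν) hΩ hΩc hu.contDiffOn
    hu.exists_ne_zero hlam
  rw [hu.energy_eq] at henergy
  exact henergy.not_ge (mul_integral_posPart_pow_four_add_sum_nonpos hst hmu hbeta hrow
    (integrableOn_of_continuousOn_closure hΩc (hu.contDiffOn.continuousOn.pow 4))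
    fun i hi => (ae_restrict_mem hΩ.measurableSet).mono (heq i hi))

end NehariIdentity

section Blocks

/-- The `b`-th block `{pb - p + 1, …, pb}` of `p` consecutive indices, for `1 ≤ b`. -/
abbrev block (p b : ℕ) : Finset ℕ := Finset.Icc (p * b - p + 1) (p * b)

theorem block_subset_Icc {p b B : ℕ} (hb : b ≤ B) : block p b ⊆ Finset.Icc 1 (p * B) :=
  Finset.Icc_subset_Icc (Nat.le_add_left 1 _) (Nat.mul_le_mul_left p hb)

theorem mul_mem_block {p b : ℕ} (hp : 0 < p) (hb : 0 < b) : p * b ∈ block p b := by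
  have := Nat.mul_pos hp hb
  simp only [Finset.mem_Icc]
  omega

theorem exists_mem_block {p B j : ℕ} (hj : j ∈ Finset.Icc 1 (p * B)) :
    ∃ b ∈ Finset.Icc 1 B, j ∈ block p b := by
  obtain ⟨hj1, hjB⟩ := Finset.mem_Icc.1 hj
  have hp : 0 < p := Nat.pos_of_mul_pos_right (hj1.trans hjB)
  have hlt : (j - 1) / p < B := by
    rw [Nat.div_lt_iff_lt_mul hp, mul_comm]
    omega
  have hle := Nat.mul_div_le (j - 1) p
  have hlt_succ := Nat.lt_mul_div_succ (j - 1) hp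
  refine ⟨(j - 1) / p + 1, Finset.mem_Icc.2 ⟨Nat.le_add_left 1 _, hlt⟩, ?_⟩
  rw [mul_add_one] at hlt_succ
  rw [Finset.mem_Icc, mul_add_one]
  omega

theorem not_dvd_of_mem_block {p b i : ℕ} (hi : i ∈ block p b) (hib : i ≠ p * b) : ¬ p ∣ i := by
  rintro ⟨c, rfl⟩
  obtain ⟨hlow, hup⟩ := Finset.mem_Icc.1 hi
  have hcb : c + 1 ≤ b := lt_of_mul_lt_mul_left (lt_of_le_of_ne hup hib) (Nat.zero_le p)
  have := Nat.mul_le_mul_left p hcb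
  rw [mul_add_one] at this
  omega

theorem blockCycle_of_not_dvd {p j : ℕ} (hj : ¬ p ∣ j) : blockCycle p j = j + 1 :=
  if_neg fun h => hj (Nat.dvd_of_mod_eq_zero h)

theorem eq_of_forall_succ_eq {α : Type*} {f : ℕ → α} {a e : ℕ}
    (h : ∀ i ∈ Finset.Ico a e, f (i + 1) = f i) {i : ℕ} (hi : i ∈ Finset.Icc a e) :
    f i = f e := by
  obtain ⟨hai, hie⟩ := Finset.mem_Icc.1 hi
  induction e, hie using Nat.le_induction with
  | base => rfl
  | succ e hie ih =>
    rw [h e (Finset.mem_Ico.2 ⟨hai.trans hie, e.lt_succ_self⟩)]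
    exact ih (fun m hm => h m (Finset.Ico_subset_Ico_right e.le_succ hm))
      (Finset.mem_Icc.2 ⟨hai, hie⟩)

variable {X Y : Type*} {s : Set X} {u : ℕ → X → Y} {a e : ℕ}

theorem eqOn_of_forall_succ_eqOn (h : ∀ i ∈ Finset.Ico a e, Set.EqOn (u (i + 1)) (u i) s)
    {i : ℕ} (hi : i ∈ Finset.Icc a e) : Set.EqOn (u i) (u e) s :=
  Set.domRestrict_eq_domRestrict_iff.1 <| eq_of_forall_succ_eq (f := fun i => s.domRestrict (u i))
    (fun m hm => Set.domRestrict_eq_domRestrict_iff.2 (h m hm)) hi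

theorem eqOn_comp_iff_of_eqOn_comp {v w : X → Y} {g : X → X} (hg : g '' s = s)
    (hw : Set.EqOn w (v ∘ g) s) : Set.EqOn (w ∘ g) w s ↔ Set.EqOn (v ∘ g) v s := by
  have hmaps : Set.MapsTo g s s := Set.mapsTo_iff_image_subset.2 hg.subset
  calc
    Set.EqOn (w ∘ g) w s ↔ Set.EqOn ((v ∘ g) ∘ g) (v ∘ g) s :=
      ⟨fun h => ((hw.comp_right hmaps).symm.trans h).trans hw,
        fun h => ((hw.comp_right hmaps).trans h).trans hw.symm⟩
    _ ↔ Set.EqOn (v ∘ g) v (g '' s) := by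
      simp only [Set.EqOn, Set.forall_mem_image, Function.comp_apply]
    _ ↔ Set.EqOn (v ∘ g) v s := by rw [hg]

theorem eqOn_of_eqOn_comp_of_forall_succ {g : X → X} (hg : g '' s = s)
    (hsucc : ∀ i ∈ Finset.Ico a e, Set.EqOn (u (i + 1)) (u i ∘ g) s) {j : ℕ}
    (hj : j ∈ Finset.Icc a e) (hinv : Set.EqOn (u j ∘ g) (u j) s) {i : ℕ}
    (hi : i ∈ Finset.Icc a e) : Set.EqOn (u i) (u e) s := by
  have hinv_iff_last {m : ℕ} (hm : m ∈ Finset.Icc a e) :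
      Set.EqOn (u m ∘ g) (u m) s = Set.EqOn (u e ∘ g) (u e) s :=
    eq_of_forall_succ_eq (f := fun m => Set.EqOn (u m ∘ g) (u m) s)
      (fun m hm => propext (eqOn_comp_iff_of_eqOn_comp hg (hsucc m hm))) hm
  refine eqOn_of_forall_succ_eqOn (fun m hm => (hsucc m hm).trans ?_) hi
  rwa [hinv_iff_last (Finset.Ico_subset_Icc_self hm), ← hinv_iff_last hj]

end Blocks

section Rotation

variable {n : ℕ}

theorem norm_rotPt (hn : 2 ≤ n) (θ : ℝ) (x : Euc n) : ‖rotPt θ x‖ = ‖x‖ := by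
  obtain ⟨m, rfl⟩ := Nat.exists_eq_add_of_le' hn
  rw [EuclideanSpace.norm_eq, EuclideanSpace.norm_eq]
  congr 1
  simp only [rotPt, Fin.val_eq_zero_iff, Nat.one_mod, Fin.mk_one, Fin.zero_eta, norm_eq_abs,
    sq_abs, ite_pow, Fin.sum_univ_succ, ↓reduceIte, Fin.succ_ne_zero, Fin.val_succ,
    Nat.add_eq_right, Fin.succ_zero_eq_one]
  linear_combination (x 0 ^ 2 + x 1 ^ 2) * Real.sin_sq_add_cos_sq θ

theorem rotPt_rotPt_neg (hn : 2 ≤ n) (θ : ℝ) (x : Euc n) : rotPt θ (rotPt (-θ) x) = x := by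
  obtain ⟨m, rfl⟩ := Nat.exists_eq_add_of_le' hn
  ext i
  refine Fin.cases ?_ (Fin.cases ?_ fun i => ?_) i
  · suffices cos θ * (cos θ * x 0 + sin θ * x 1) - sin θ * (-(sin θ * x 0) + cos θ * x 1) = x 0 by
      simpa [rotPt] using this
    linear_combination x 0 * Real.sin_sq_add_cos_sq θ
  · suffices sin θ * (cos θ * x 0 + sin θ * x 1) + cos θ * (-(sin θ * x 0) + cos θ * x 1) = x 1 by
      simpa [rotPt] using this
    linear_combination x 1 * Real.sin_sq_add_cos_sq θ
  · simp [rotPt]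

theorem RadialDomain.isOpen {Ω : Set (Euc n)} (hΩ : RadialDomain Ω) : IsOpen Ω := by
  rcases hΩ with ⟨R, -, rfl⟩ | ⟨r, R, -, -, rfl⟩
  · exact Metric.isOpen_ball
  · exact (isOpen_lt continuous_const continuous_norm).inter
      (isOpen_lt continuous_norm continuous_const)

theorem RadialDomain.isCompact_closure {Ω : Set (Euc n)} (hΩ : RadialDomain Ω) :
    IsCompact (closure Ω) := by
  suffices ∃ R, Ω ⊆ Metric.ball 0 R from
    this.elim fun R hR => (Metric.isBounded_ball.subset hR).isCompact_closure
  rcases hΩ with ⟨R, -, rfl⟩ | ⟨r, R, -, -, rfl⟩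
  · exact ⟨R, subset_rfl⟩
  · exact ⟨R, fun x hx => mem_ball_zero_iff.2 hx.2⟩

theorem RadialDomain.mem_iff_of_norm_eq {Ω : Set (Euc n)} (hΩ : RadialDomain Ω) {x y : Euc n}
    (hxy : ‖x‖ = ‖y‖) : x ∈ Ω ↔ y ∈ Ω := by
  rcases hΩ with ⟨R, -, rfl⟩ | ⟨r, R, -, -, rfl⟩ <;> simp [hxy]

theorem RadialDomain.image_rotPt {Ω : Set (Euc n)} (hΩ : RadialDomain Ω) (hn : 2 ≤ n) (θ : ℝ) :
    rotPt θ '' Ω = Ω := by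
  have hmem (φ : ℝ) (x : Euc n) : rotPt φ x ∈ Ω ↔ x ∈ Ω :=
    hΩ.mem_iff_of_norm_eq (norm_rotPt hn φ x)
  refine Set.Subset.antisymm (Set.image_subset_iff.2 fun x hx => (hmem θ x).2 hx) fun x hx => ?_
  exact ⟨rotPt (-θ) x, (hmem (-θ) x).2 hx, rotPt_rotPt_neg hn θ x⟩

end Rotation

section Hypotheses

variable {N p B : ℕ} {lam mu : ℕ → ℝ} {beta : ℕ → ℕ → ℝ}

theorem SysAssump.lam_pos (h : SysAssump N p B lam mu beta) {j : ℕ} (hj : j ∈ Finset.Icc 1 N) :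
    0 < lam j := by
  obtain ⟨-, rfl, -, hA, -⟩ := h
  obtain ⟨b, hb, hjb⟩ := exists_mem_block hj
  exact (hA b hb j hjb).2

theorem SysAssump.mu_add_sum_row_nonpos (h : SysAssump N p B lam mu beta) {b j : ℕ}
    (hb : b ∈ Finset.Icc 1 B) (hj : j ∈ block p b) :
    mu j + ∑ i ∈ (block p b).erase j, beta j i ≤ 0 := by
  obtain ⟨-, rfl, -, -, hsymm, -, -, hD⟩ := h
  have hsub := block_subset_Icc (p := p) (Finset.mem_Icc.1 hb).2
  refine (hD b hb j hj).trans_eq' (congrArg (mu j + ·) (Finset.sum_congr rfl fun i hi => ?_))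
  obtain ⟨hij, hi⟩ := Finset.mem_erase.1 hi
  exact (hsymm i (hsub hi) j (hsub hj) hij).1

theorem InNehariPos.isNehariComponent {n : ℕ} {Ω : Set (Euc n)} {k : ℕ} {u : ℕ → Euc n → ℝ}
    (hu : InNehariPos Ω N p k lam mu beta u) {j : ℕ} (hj : j ∈ Finset.Icc 1 N) :
    IsNehariComponent Ω volume (Finset.Icc 1 N) lam mu beta u j :=
  let ⟨hC1, _, hne, _, hnehari⟩ := hu.1 j hj
  ⟨hC1, hne, hnehari⟩

end Hypotheses

theorem no_fixed_point_on_nehari_general {E : Type*} [NormedAddCommGroup E] [NormedSpace ℝ E]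
    [MeasurableSpace E] [OpensMeasurableSpace E] {ν : Measure E} [IsFiniteMeasureOnCompacts ν]
    [ν.IsOpenPosMeasure] {Ω : Set E} (hΩ : IsOpen Ω) (hΩc : IsCompact (closure Ω)) {g : E → E}
    (hg : g '' Ω = Ω) {p B : ℕ} (hp : 0 < p) (hB : 0 < B) {lam mu : ℕ → ℝ} {beta : ℕ → ℕ → ℝ}
    (hlam : ∀ j ∈ Finset.Icc 1 (p * B), 0 < lam j) (hmu : ∀ j ∈ Finset.Icc 1 (p * B), 0 ≤ mu j)
    (hbeta : ∀ i ∈ Finset.Icc 1 (p * B), ∀ j ∈ Finset.Icc 1 (p * B), i ≠ j → beta i j ≤ 0)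
    (hrow : ∀ b ∈ Finset.Icc 1 B, ∀ j ∈ block p b,
      mu j + ∑ i ∈ (block p b).erase j, beta j i ≤ 0)
    {u : ℕ → E → ℝ}
    (hu : ∀ j ∈ Finset.Icc 1 (p * B),
      IsNehariComponent Ω ν (Finset.Icc 1 (p * B)) lam mu beta u j)
    (hsucc : ∀ j, 1 ≤ j → j < p * B → ¬ p ∣ j → Set.EqOn (u (j + 1)) (u j ∘ g) Ω) :
    (∀ b ∈ Finset.Icc 1 B, ¬ ∀ i ∈ block p b, Set.EqOn (u i) (u (p * b)) Ω) ∧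
    (¬ ∀ j ∈ Finset.Icc 1 (p * B), Set.EqOn (u (blockCycle p j)) (u j) Ω) ∧
    ∀ j ∈ Finset.Icc 1 (p * B), ¬ Set.EqOn (u j ∘ g) (u j) Ω := by
  have hblock (b : ℕ) (hb : b ∈ Finset.Icc 1 B) :
      ¬ ∀ i ∈ block p b, Set.EqOn (u i) (u (p * b)) Ω := by
    obtain ⟨hb1, hbB⟩ := Finset.mem_Icc.1 hb
    have hlast := mul_mem_block hp hb1
    have hlastN := block_subset_Icc hbB hlast
    exact (hu _ hlastN).not_forall_eqOn hΩ hΩc (block_subset_Icc hbB) (hlam _ hlastN)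
      (hmu _ hlastN)
      (fun i hi => hbeta _ hlastN i (Finset.mem_of_mem_erase hi) (Finset.ne_of_mem_erase hi).symm)
      (hrow b hb _ hlast)
  have hinner {b i : ℕ} (hb : b ∈ Finset.Icc 1 B) (hi : i ∈ Finset.Ico (p * b - p + 1) (p * b)) :
      i ∈ Finset.Icc 1 (p * B) ∧ i < p * b ∧ ¬ p ∣ i :=
    have hib := Finset.Ico_subset_Icc_self hi
    have hlt := (Finset.mem_Ico.1 hi).2
    ⟨block_subset_Icc (Finset.mem_Icc.1 hb).2 hib, hlt, not_dvd_of_mem_block hib hlt.ne⟩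
  refine ⟨hblock, fun hfix => ?_, fun j hj hinv => ?_⟩
  · have hone : 1 ∈ Finset.Icc 1 B := Finset.mem_Icc.2 ⟨le_rfl, hB⟩
    refine hblock 1 hone fun i => eqOn_of_forall_succ_eqOn fun m hm => ?_
    obtain ⟨hmN, -, hpm⟩ := hinner hone hm
    exact blockCycle_of_not_dvd hpm ▸ hfix m hmN
  · obtain ⟨b, hb, hjb⟩ := exists_mem_block hj
    refine hblock b hb fun i => eqOn_of_eqOn_comp_of_forall_succ hg (fun m hm => ?_) hjb hinv
    obtain ⟨hmN, hmb, hpm⟩ := hinner hb hm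
    have hbN : p * b ≤ p * B := Nat.mul_le_mul_left p (Finset.mem_Icc.1 hb).2
    exact hsucc m (Finset.mem_Icc.1 hmN).1 (hmb.trans_le hbN) hpm

/-- Lemma 2.3 of the paper. On `𝒩ₖ⁺` no block of `p` consecutive
components can consist of equal functions; consequently `σU ≠ U` on `𝒩ₖ⁺` and no
component of an element of `𝒩ₖ⁺` is `𝓡_{2π/(pk)}`-invariant. -/
theorem no_fixed_point_on_nehari
    {n : ℕ} (hn : n = 2 ∨ n = 3) (Ω : Set (Euc n)) (hΩ : RadialDomain Ω)
    (N p B : ℕ) (lam mu : ℕ → ℝ) (beta : ℕ → ℕ → ℝ)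
    (hassump : SysAssump N p B lam mu beta)
    (k : ℕ) (hk : 1 ≤ k)
    (u : ℕ → Euc n → ℝ) (hu : InNehariPos Ω N p k lam mu beta u) :
    (∀ b ∈ Finset.Icc 1 B,
      ¬ (∀ i ∈ Finset.Icc (p * b - p + 1) (p * b), ∀ x ∈ Ω, u i x = u (p * b) x)) ∧
    ¬ (∀ j ∈ Finset.Icc 1 N, ∀ x ∈ Ω, u (blockCycle p j) x = u j x) ∧
    (∀ j ∈ Finset.Icc 1 N, ¬ RotInv (2 * π / ((p : ℝ) * k)) Ω (u j)) := by
  have ⟨hp, hN, hB, _, hbeta, hmu, _⟩ := hassump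
  subst hN
  exact no_fixed_point_on_nehari_general hΩ.isOpen hΩ.isCompact_closure
    (hΩ.image_rotPt (by omega) (-(2 * π / ((p : ℝ) * k)))) hp.pos hB (fun j => hassump.lam_pos)
    (fun j hj => (hmu j hj).le) (fun i hi j hj hij => (hbeta i hi j hj hij).2)
    (fun b hb j => hassump.mu_add_sum_row_nonpos hb) (fun j => hu.isNehariComponent) hu.2

end
end

section
/- Assume in addition that X is a metric space. Let A ⊂ X be compact and σ-invariant with σx ≠ x for every x ∈ A. Then γ(A) < ∞, and there exists an open σ-invariant set U ⊂ X with A ⊂ U such that γ(cl U) = γ(A). -/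
noncomputable section

open Real

/-- The `ℤ_p` index `γ(A)` of a (closed, `σ`-invariant) subset `A ⊆ X`: the least `m`
such that there is a continuous map `h : A → ℂ^m \ {0}` with `h (σ x) = e^{2πi/p} h x`,
and `∞` if no such `m` exists. -/
def gammaIdx {X : Type*} [TopologicalSpace X] (p : ℕ) (σ : X → X) (A : Set X) : ℕ∞ :=
  sInf ((fun m : ℕ => (m : ℕ∞)) '' {m : ℕ | ∃ h : X → Fin m → ℂ,
    ContinuousOn h A ∧ (∀ x ∈ A, h x ≠ 0) ∧
    (∀ x ∈ A, h (σ x) = Complex.exp (2 * π * Complex.I / p) • h x)})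

/-!
Averaging `z⁻ᵏ g(σᵏ x)` over one period makes any continuous `g` equivariant, and it leaves `g`
unchanged wherever `g` was already equivariant. If the orbit of `a` has `p` elements, a bump
function at `a` vanishing on the rest of the orbit has nonzero average at `a`; by compactness
finitely many such averages have no common zero on `A`, so `γ(A) < ∞`. For the neighborhood, extend
an optimal map from `A` to all of `X` and average: the norm of the result `G` is invariant and
bounded below on `A` by some `d > 0`, so `U = {d / 2 < ‖G‖}` works.
-/

universe u v

open Function Set

section TwistedAverage

variable {X : Type*} {𝕜 E : Type*} [Field 𝕜] [AddCommGroup E] [Module 𝕜 E]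
  {p : ℕ} {σ : X → X} {z : 𝕜} {g : X → E}

/-- The average of `g` over a period of `σ`, twisted by the powers of `z⁻¹` (as opposed to `z`) so
that it projects onto the solutions of `h (σ x) = z • h x`. -/
def twistedAverage (p : ℕ) (σ : X → X) (z : 𝕜) (g : X → E) (x : X) : E :=
  (p : 𝕜)⁻¹ • ∑ k ∈ Finset.range p, z⁻¹ ^ k • g (σ^[k] x)

lemma twistedAverage_map (hp : p ≠ 0) (hσ : σ^[p] = id) (hz : z ^ p = 1) (x : X) :
    twistedAverage p σ z g (σ x) = z • twistedAverage p σ z g x := by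
  have hz0 : z ≠ 0 := (IsUnit.of_pow_eq_one hz hp).ne_zero
  let f : ℕ → E := fun k ↦ z⁻¹ ^ k • g (σ^[k] x)
  have hf : f p = f 0 := by simp [f, hσ, inv_pow, hz]
  have rotate : ∑ k ∈ Finset.range p, f (k + 1) = ∑ k ∈ Finset.range p, f k := by
    rw [← sub_eq_zero, ← Finset.sum_sub_distrib, Finset.sum_range_sub, hf, sub_self]
  have shift (k : ℕ) : z⁻¹ ^ k • g (σ^[k] (σ x)) = z • f (k + 1) := by
    rw [smul_smul, pow_succ', mul_inv_cancel_left₀ hz0, iterate_succ_apply]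
  simp only [twistedAverage, shift, ← Finset.smul_sum, rotate]
  exact smul_comm _ _ _

lemma map_iterate_of_forall_map_smul {A : Set X} (hA : MapsTo σ A A)
    (hg : ∀ x ∈ A, g (σ x) = z • g x) (k : ℕ) {x : X} (hx : x ∈ A) :
    g (σ^[k] x) = z ^ k • g x := by
  induction k with
  | zero => simp
  | succ k ih => rw [iterate_succ_apply', hg _ (hA.iterate k hx), ih, smul_smul, pow_succ']

lemma twistedAverage_eqOn {A : Set X} (hp : (p : 𝕜) ≠ 0) (hz : z ≠ 0) (hA : MapsTo σ A A)
    (hg : ∀ x ∈ A, g (σ x) = z • g x) : EqOn (twistedAverage p σ z g) g A := by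
  intro x hx
  have hterm (k : ℕ) : z⁻¹ ^ k • g (σ^[k] x) = g x := by
    rw [map_iterate_of_forall_map_smul hA hg k hx, smul_smul, ← mul_pow, inv_mul_cancel₀ hz,
      one_pow, one_smul]
  simp only [twistedAverage, hterm, Finset.sum_const, Finset.card_range]
  rw [← Nat.cast_smul_eq_nsmul 𝕜, inv_smul_smul₀ hp]

lemma twistedAverage_eq_of_forall_iterate_eq_zero {x : X} (hp : p ≠ 0)
    (hg : ∀ k, k ≠ 0 → k < p → g (σ^[k] x) = 0) :
    twistedAverage p σ z g x = (p : 𝕜)⁻¹ • g x := by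
  rw [twistedAverage, Finset.sum_eq_single_of_mem 0 (Finset.mem_range.2 hp.bot_lt)]
  · simp
  · intro k hk hk0
    rw [hg k hk0 (Finset.mem_range.1 hk), smul_zero]

lemma continuous_twistedAverage [TopologicalSpace X] [TopologicalSpace E] [ContinuousAdd E]
    [ContinuousConstSMul 𝕜 E] (hσ : Continuous σ) (hg : Continuous g) :
    Continuous (twistedAverage p σ z g) :=
  (continuous_finsetSum _ fun k _ ↦ (hg.comp (hσ.iterate k)).const_smul _).const_smul _

end TwistedAverage

section Extension

variable {X : Type u} [TopologicalSpace X] [T35Space X] {A : Set X}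

-- `X` need not be normal, but its Stone–Čech compactification is, and `A` is closed in it.
lemma exists_continuousMap_eqOn_of_isCompact {Y : Type v} [TopologicalSpace Y]
    [TietzeExtension.{u, v} Y] (hA : IsCompact A) {f : X → Y} (hf : ContinuousOn f A) :
    ∃ g : C(X, Y), EqOn g f A := by
  have : CompactSpace A := isCompact_iff_compactSpace.1 hA
  let e : A → StoneCech X := fun x ↦ stoneCechUnit (x : X)
  have he : Topology.IsClosedEmbedding e :=
    (continuous_stoneCechUnit.comp continuous_subtype_val).isClosedEmbedding
      (injective_stoneCechUnit_of_t35Space.comp Subtype.val_injective)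
  obtain ⟨g, hg⟩ := ContinuousMap.exists_extension' he ⟨A.domRestrict f, hf.domRestrict⟩
  exact ⟨g.comp ⟨stoneCechUnit, continuous_stoneCechUnit⟩, fun x hx ↦ congrFun hg ⟨x, hx⟩⟩

lemma exists_continuous_equivariant_eqOn_of_isCompact {𝕜 : Type*} {E : Type v} [Field 𝕜]
    [AddCommGroup E] [Module 𝕜 E] [TopologicalSpace E] [ContinuousAdd E] [ContinuousConstSMul 𝕜 E]
    [TietzeExtension.{u, v} E] {p : ℕ} {σ : X → X} {z : 𝕜} {h : X → E}
    (hp : (p : 𝕜) ≠ 0) (hσc : Continuous σ) (hσp : σ^[p] = id) (hz : z ^ p = 1)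
    (hA : IsCompact A) (hσA : MapsTo σ A A) (hc : ContinuousOn h A)
    (hh : ∀ x ∈ A, h (σ x) = z • h x) :
    ∃ G : X → E, Continuous G ∧ (∀ x, G (σ x) = z • G x) ∧ EqOn G h A := by
  have hp0 : p ≠ 0 := by
    rintro rfl
    exact hp Nat.cast_zero
  obtain ⟨g, hg⟩ := exists_continuousMap_eqOn_of_isCompact hA hc
  have hgz : ∀ x ∈ A, g (σ x) = z • g x := fun x hx ↦ by rw [hg (hσA hx), hg hx, hh x hx]
  exact ⟨twistedAverage p σ z g, continuous_twistedAverage hσc g.continuous,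
    twistedAverage_map hp0 hσp hz,
    (twistedAverage_eqOn hp (IsUnit.of_pow_eq_one hz hp0).ne_zero hσA hgz).trans hg⟩

end Extension

/-- A continuous map `h : A → E \ {0}` with `h (σ x) = z • h x`, of the kind counted by `gammaIdx`.
As there, `h` is a map on all of `X` whose values off `A` are irrelevant. -/
structure IsIndexMap {X E : Type*} [TopologicalSpace X] [TopologicalSpace E] [Zero E] [SMul ℂ E]
    (z : ℂ) (σ : X → X) (A : Set X) (h : X → E) : Prop where
  continuousOn : ContinuousOn h A
  ne_zero : ∀ x ∈ A, h x ≠ 0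
  map_smul : ∀ x ∈ A, h (σ x) = z • h x

namespace IsIndexMap

lemma mono {X E : Type*} [TopologicalSpace X] [TopologicalSpace E] [Zero E] [SMul ℂ E]
    {z : ℂ} {σ : X → X} {A B : Set X} {h : X → E} (hh : IsIndexMap z σ B h) (hAB : A ⊆ B) :
    IsIndexMap z σ A h where
  continuousOn := hh.continuousOn.mono hAB
  ne_zero x hx := hh.ne_zero x (hAB hx)
  map_smul x hx := hh.map_smul x (hAB hx)

lemma continuousLinearEquiv_comp {X E F : Type*} [TopologicalSpace X] [AddCommGroup E] [Module ℂ E]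
    [TopologicalSpace E] [AddCommGroup F] [Module ℂ F] [TopologicalSpace F]
    {z : ℂ} {σ : X → X} {A : Set X} {h : X → E} (hh : IsIndexMap z σ A h) (L : E ≃L[ℂ] F) :
    IsIndexMap z σ A (L ∘ h) where
  continuousOn := L.continuous.comp_continuousOn hh.continuousOn
  ne_zero x hx := L.map_ne_zero_iff.2 (hh.ne_zero x hx)
  map_smul x hx := by rw [comp_apply, hh.map_smul x hx, L.map_smul, comp_apply]

lemma exists_isOpen_isIndexMap_closure {X : Type u} {E : Type v} [TopologicalSpace X] [T35Space X]
    [NormedAddCommGroup E] [NormedSpace ℂ E] [TietzeExtension.{u, v} E]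
    {p : ℕ} {σ : X → X} {z : ℂ} {A : Set X} {h : X → E} (hh : IsIndexMap z σ A h)
    (hp : p ≠ 0) (hσc : Continuous σ) (hσp : σ^[p] = id) (hz : z ^ p = 1)
    (hA : IsCompact A) (hσA : MapsTo σ A A) :
    ∃ (U : Set X) (G : X → E),
      IsOpen U ∧ A ⊆ U ∧ σ ⁻¹' U = U ∧ IsIndexMap z σ (closure U) G := by
  obtain ⟨G, hGc, hGz, hGA⟩ := exists_continuous_equivariant_eqOn_of_isCompact
    (Nat.cast_ne_zero.2 hp) hσc hσp hz hA hσA hh.continuousOn hh.map_smul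
  have hnorm (x : X) : ‖G (σ x)‖ = ‖G x‖ := by
    rw [hGz, norm_smul, Complex.norm_eq_one_of_pow_eq_one hz hp, one_mul]
  have hpos : ∀ x ∈ A, 0 < ‖G x‖ := fun x hx ↦ norm_pos_iff.2 (hGA hx ▸ hh.ne_zero x hx)
  obtain ⟨d, hd0, hd⟩ := hA.exists_forall_le' hGc.norm.continuousOn hpos
  have hclosure : closure {x | d / 2 < ‖G x‖} ⊆ {x | d / 2 ≤ ‖G x‖} :=
    closure_lt_subset_le continuous_const hGc.norm
  refine ⟨{x | d / 2 < ‖G x‖}, G, isOpen_lt continuous_const hGc.norm,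
    fun x hx ↦ (half_lt_self hd0).trans_le (hd x hx), by simp only [preimage_ofPred_eq, hnorm],
    hGc.continuousOn, fun x hx ↦ ?_, fun x _ ↦ hGz x⟩
  exact norm_pos_iff.1 ((half_pos hd0).trans_le (hclosure hx))

end IsIndexMap

section FreeOrbit

variable {X : Type*} [TopologicalSpace X] {p : ℕ} {σ : X → X} {A : Set X}

lemma exists_continuous_ne_zero_forall_iterate_eq_zero [T35Space X] (σ : X → X) (a : X) :
    ∃ g : X → ℂ, Continuous g ∧ g a ≠ 0 ∧
      ∀ k, k ≠ 0 → k < minimalPeriod σ a → g (σ^[k] a) = 0 := by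
  let K : Set X := (fun k ↦ σ^[k] a) '' {k | k ≠ 0 ∧ k < minimalPeriod σ a}
  have hK : IsClosed K := (((finite_lt_nat _).subset fun _ hk ↦ hk.2).image _).isClosed
  have haK : a ∉ K := by
    rintro ⟨k, ⟨hk0, hkp⟩, hk⟩
    exact not_isPeriodicPt_of_pos_of_lt_minimalPeriod hk0 hkp hk
  obtain ⟨f, hfc, hfa, hfK⟩ := CompletelyRegularSpace.completely_regular a K hK haK
  refine ⟨fun x ↦ 1 - ((f x : ℝ) : ℂ), by fun_prop, by simp [hfa], fun k hk0 hkp ↦ ?_⟩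
  simp [hfK (mem_image_of_mem _ ⟨hk0, hkp⟩)]

lemma exists_continuous_twistedAverage_ne_zero [T35Space X] (hp : p ≠ 0) (z : ℂ) {a : X}
    (ha : minimalPeriod σ a = p) :
    ∃ g : X → ℂ, Continuous g ∧ twistedAverage p σ z g a ≠ 0 := by
  obtain ⟨g, hgc, hga, hg⟩ := exists_continuous_ne_zero_forall_iterate_eq_zero σ a
  refine ⟨g, hgc, ?_⟩
  rw [twistedAverage_eq_of_forall_iterate_eq_zero hp (ha ▸ hg)]
  exact smul_ne_zero (inv_ne_zero (Nat.cast_ne_zero.2 hp)) hga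

lemma exists_isIndexMap_of_isCompact [T35Space X] {z : ℂ} (hp : p ≠ 0) (hσc : Continuous σ)
    (hσp : σ^[p] = id) (hz : z ^ p = 1) (hA : IsCompact A)
    (hfree : ∀ x ∈ A, minimalPeriod σ x = p) :
    ∃ (t : Finset X) (h : X → t → ℂ), IsIndexMap z σ A h := by
  choose! g hgc hga using fun a (ha : a ∈ A) ↦
    exists_continuous_twistedAverage_ne_zero hp z (hfree a ha)
  have hcont (a : X) (ha : a ∈ A) : Continuous (twistedAverage p σ z (g a)) :=
    continuous_twistedAverage hσc (hgc a ha)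
  obtain ⟨t, htA, ht⟩ := hA.elim_nhds_subcover (fun a ↦ {x | twistedAverage p σ z (g a) x ≠ 0})
    fun a ha ↦ (isOpen_ne_fun (hcont a ha) continuous_const).mem_nhds (hga a ha)
  refine ⟨t, fun x (a : t) ↦ twistedAverage p σ z (g a) x,
    (continuous_pi fun a : t ↦ hcont a (htA a a.2)).continuousOn, fun x hx h0 ↦ ?_,
    fun x _ ↦ funext fun a ↦ twistedAverage_map hp hσp hz x⟩
  obtain ⟨a, hat, hax⟩ := mem_iUnion₂.1 (ht hx)
  exact hax (congrFun h0 ⟨a, hat⟩)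

end FreeOrbit

section GammaIdx

variable {X : Type*} [TopologicalSpace X] {p : ℕ} {σ : X → X} {A B : Set X}

lemma IsIndexMap.gammaIdx_le_finrank {E : Type*} [AddCommGroup E] [Module ℂ E] [TopologicalSpace E]
    [IsTopologicalAddGroup E] [ContinuousSMul ℂ E] [T2Space E] [FiniteDimensional ℂ E] {h : X → E}
    (hh : IsIndexMap (Complex.exp (2 * π * Complex.I / p)) σ A h) :
    gammaIdx p σ A ≤ Module.finrank ℂ E := by
  have hL := hh.continuousLinearEquiv_comp
    (ContinuousLinearEquiv.ofFinrankEq (Module.finrank_fin_fun ℂ).symm)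
  exact sInf_le ⟨_, ⟨_, hL.continuousOn, hL.ne_zero, hL.map_smul⟩, rfl⟩

lemma exists_isIndexMap_of_gammaIdx_ne_top (hA : gammaIdx p σ A ≠ ⊤) :
    ∃ (m : ℕ) (h : X → Fin m → ℂ),
      IsIndexMap (Complex.exp (2 * π * Complex.I / p)) σ A h ∧ gammaIdx p σ A = m := by
  have hne := nonempty_iff_ne_empty.2 fun h ↦ hA ((congrArg sInf h).trans sInf_empty)
  obtain ⟨m, ⟨h, hc, h0, hz⟩, hm⟩ := csInf_mem hne
  exact ⟨m, h, ⟨hc, h0, hz⟩, hm.symm⟩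

lemma gammaIdx_mono (hAB : A ⊆ B) : gammaIdx p σ A ≤ gammaIdx p σ B := by
  by_cases hB : gammaIdx p σ B = ⊤
  · exact hB ▸ le_top
  · obtain ⟨m, h, hh, hm⟩ := exists_isIndexMap_of_gammaIdx_ne_top hB
    simpa [hm] using (hh.mono hAB).gammaIdx_le_finrank

variable [T35Space X]

lemma gammaIdx_lt_top_of_isCompact (hp : p ≠ 0) (hσc : Continuous σ) (hσp : σ^[p] = id)
    (hA : IsCompact A) (hfree : ∀ x ∈ A, minimalPeriod σ x = p) : gammaIdx p σ A < ⊤ := by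
  obtain ⟨t, h, hh⟩ := exists_isIndexMap_of_isCompact hp hσc hσp
    (Complex.isPrimitiveRoot_exp p hp).pow_eq_one hA hfree
  exact hh.gammaIdx_le_finrank.trans_lt (ENat.natCast_lt_top _)

lemma exists_isOpen_gammaIdx_closure_eq (hp : p ≠ 0) (hσc : Continuous σ) (hσp : σ^[p] = id)
    (hA : IsCompact A) (hσA : MapsTo σ A A) :
    ∃ U : Set X, IsOpen U ∧ A ⊆ U ∧ σ ⁻¹' U = U ∧ gammaIdx p σ (closure U) = gammaIdx p σ A := by
  by_cases htop : gammaIdx p σ A = ⊤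
  · refine ⟨univ, isOpen_univ, subset_univ A, preimage_univ, ?_⟩
    rw [htop, eq_top_iff, ← htop]
    exact gammaIdx_mono ((subset_univ A).trans subset_closure)
  · obtain ⟨m, h, hh, hm⟩ := exists_isIndexMap_of_gammaIdx_ne_top htop
    obtain ⟨U, G, hU, hAU, hσU, hG⟩ := hh.exists_isOpen_isIndexMap_closure hp hσc hσp
      (Complex.isPrimitiveRoot_exp p hp).pow_eq_one hA hσA
    refine ⟨U, hU, hAU, hσU, le_antisymm ?_ (gammaIdx_mono (hAU.trans subset_closure))⟩
    simpa [hm] using hG.gammaIdx_le_finrank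

end GammaIdx

lemma surjective_of_iterate_eq_id {X : Type*} {σ : X → X} {p : ℕ} (hp : p ≠ 0)
    (hσ : σ^[p] = id) : Surjective σ := by
  obtain ⟨n, rfl⟩ := Nat.exists_eq_succ_of_ne_zero hp
  have hinv : RightInverse σ^[n] σ := fun x ↦ by rw [← iterate_succ_apply' σ, hσ, id]
  exact hinv.surjective

theorem gammaIdx_lt_top_and_neighborhood_general {X : Type*} [TopologicalSpace X] [T35Space X]
    {p : ℕ} (hp : p ≠ 0) {σ : X → X} (hσc : Continuous σ) (hσp : σ^[p] = id)
    {A : Set X} (hA : IsCompact A) (hσA : MapsTo σ A A) (hfree : ∀ x ∈ A, minimalPeriod σ x = p) :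
    gammaIdx p σ A < ⊤ ∧
    ∃ U : Set X, IsOpen U ∧ A ⊆ U ∧ σ '' U = U ∧
      gammaIdx p σ (closure U) = gammaIdx p σ A := by
  obtain ⟨U, hU, hAU, hσU, hγ⟩ := exists_isOpen_gammaIdx_closure_eq hp hσc hσp hA hσA
  have himage : σ '' U = U := by
    conv_lhs => rw [← hσU]
    exact image_preimage_eq U (surjective_of_iterate_eq_id hp hσp)
  exact ⟨gammaIdx_lt_top_of_isCompact hp hσc hσp hA hfree, U, hU, hAU, himage, hγ⟩

/-- Proposition 2.5 (e): a compact invariant set without fixed points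
has finite index, and the index is achieved on the closure of an invariant open
neighborhood. -/
theorem gammaIdx_lt_top_and_neighborhood
    {X : Type*} [MetricSpace X] (p : ℕ) (hp : p.Prime)
    (σ : X → X) (hσc : Continuous σ) (hσp : σ^[p] = id)
    (A : Set X) (hAcp : IsCompact A) (hAinv : σ '' A = A)
    (hfix : ∀ x ∈ A, σ x ≠ x) :
    gammaIdx p σ A < ⊤ ∧
    ∃ U : Set X, IsOpen U ∧ A ⊆ U ∧ σ '' U = U ∧
      gammaIdx p σ (closure U) = gammaIdx p σ A := by
  have : Fact p.Prime := ⟨hp⟩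
  exact gammaIdx_lt_top_and_neighborhood_general hp.ne_zero hσc hσp hAcp
    (mapsTo_iff_image_subset.2 hAinv.subset) fun x hx ↦
      minimalPeriod_eq_prime (congrFun hσp x) (hfix x hx)

end
end
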